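/- Assume μ > L_f. Let L_K = L_f + ρ‖A‖² + μ, set λ = L_K and γ_s = μ − L_f + λ, and let 0 < τ ≤ 1/(6λ). Fix x ∈ X, y ∈ F, z, z' ∈ E, define φ(w) = inf_{u ∈ X} [ K(u, y, z') + (λ/2)‖u − w‖² ] for w ∈ E, and suppose this infimum is attained at w = x. Suppose u° ∈ X minimizes w ↦ K(w, y, z) + (λ/2)‖w − x‖² over X. Let (Ω, P) be a probability space and G : Ω → E a measurable map with ∫ ‖G‖² dP < ∞, ∫ G dP = ∇ₓK(x, y, z), and ∫ ‖G(ω) − ∇ₓK(x, y, z)‖² dP(ω) ≤ σ² for some σ ≥ 0; set x⁺(ω) = proj_X(x − τ·G(ω)) and assume ω ↦ φ(x⁺(ω)) is integrable. Then ∫ φ(x⁺(ω)) dP(ω) ≤ φ(x) − (τλ²/16)·‖u° − x‖² + (λτμ + 2λτ²μ² + τλ²μ²/(8γ_s²))·‖z − z'‖² + λτ²·σ². -/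

import Mathlib

open MeasureTheory
open scoped RealInnerProductSpace

/-!
Write `K z` for the function `u ↦ h u + (μ / 2) * ‖u - z‖ ^ 2`, where `h` is the augmented
Lagrangian at the fixed multiplier, and let `v` be the minimizer of
`K z' + (lam / 2) * ‖· - x‖ ^ 2` over `X`, so that the envelope at a point `p` exceeds its value at
`x` by at most `(lam / 2) * (‖v - p‖ ^ 2 - ‖v - x‖ ^ 2)`. One projected gradient step on `K z`
brings `x` closer to `v` up to the gap `K z v - K z p`, and `v` almost minimizes
`K z + (lam / 2) * ‖· - x‖ ^ 2` because moving the centre from `z'` to `z` only tilts a strongly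
convex objective by a linear term. The noise enters through an inner product with `v - x`, which is
deterministic, and through its square. Finally `v` is replaced by `u₀`, which is within
`(μ / γs) * ‖z - z'‖` of it.
-/

section QuadraticBounds

variable {E : Type*} [NormedAddCommGroup E] [InnerProductSpace ℝ E] {f : E → ℝ} {f' : E → E}
  {m L : ℝ}

/-- At every point `f` lies above the parabola of curvature `m` that has slope `f'` there. The
curvature may be negative, so that weak and strong convexity are treated together. -/
def HasQuadraticLowerBound (f : E → ℝ) (f' : E → E) (m : ℝ) : Prop :=
  ∀ u v, f u + ⟪f' u, v - u⟫ + m / 2 * ‖v - u‖ ^ 2 ≤ f v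

/-- At every point `f` lies below the parabola of curvature `L` that has slope `f'` there: the
inequality of the descent lemma for `L`-smooth functions. -/
def HasQuadraticUpperBound (f : E → ℝ) (f' : E → E) (L : ℝ) : Prop :=
  ∀ u v, f v ≤ f u + ⟪f' u, v - u⟫ + L / 2 * ‖v - u‖ ^ 2

theorem hasQuadraticUpperBound_of_inner_gradient_sub_le [CompleteSpace E]
    (hf : ∀ x, HasGradientAt f (f' x) x)
    (hinner : ∀ u v, ⟪f' v - f' u, v - u⟫ ≤ L * ‖v - u‖ ^ 2) :
    HasQuadraticUpperBound f f' L := by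
  intro u v
  set d := v - u with hd
  have hf_line (t : ℝ) :
      HasDerivAt (fun s : ℝ => f (u + s • d)) ⟪f' (u + t • d), d⟫ t := by
    have hline : HasDerivAt (fun s : ℝ => u + s • d) d t := by
      simpa using ((hasDerivAt_id t).smul_const d).const_add u
    simpa [Function.comp_def] using (hf (u + t • d)).hasFDerivAt.comp_hasDerivAt t hline
  have hparabola (t : ℝ) :
      HasDerivAt (fun s : ℝ => f u + s * ⟪f' u, d⟫ + L / 2 * ‖d‖ ^ 2 * s ^ 2)
        (⟪f' u, d⟫ + L * ‖d‖ ^ 2 * t) t := by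
    refine ((((hasDerivAt_id t).mul_const _).const_add _).add
      ((hasDerivAt_pow 2 t).const_mul _)).congr_deriv ?_
    norm_num
    ring
  have hslope : ∀ t ∈ Set.Ico (0 : ℝ) 1,
      ⟪f' (u + t • d), d⟫ ≤ ⟪f' u, d⟫ + L * ‖d‖ ^ 2 * t := by
    rintro t ⟨ht, -⟩
    rcases ht.eq_or_lt with rfl | ht
    · simp
    have h := hinner u (u + t • d)
    rw [add_sub_cancel_left, inner_smul_right, inner_sub_left, norm_smul, Real.norm_of_nonneg ht.le,
      mul_pow] at h
    have : t * (⟪f' (u + t • d), d⟫ - ⟪f' u, d⟫) ≤ t * (L * ‖d‖ ^ 2 * t) := by linarith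
    linarith [le_of_mul_le_mul_left this ht]
  have hcompare := image_le_of_deriv_right_le_deriv_boundary
    (fun t _ => (hf_line t).continuousAt.continuousWithinAt)
    (fun t _ => (hf_line t).hasDerivWithinAt) (by simp)
    (fun t _ => (hparabola t).continuousAt.continuousWithinAt)
    (fun t _ => (hparabola t).hasDerivWithinAt) hslope (Set.right_mem_Icc.2 zero_le_one)
  simpa [hd] using hcompare

theorem hasQuadraticUpperBound_of_lipschitz_gradient [CompleteSpace E]
    (hf : ∀ x, HasGradientAt f (f' x) x) (hlip : ∀ u v, ‖f' u - f' v‖ ≤ L * ‖u - v‖) :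
    HasQuadraticUpperBound f f' L := by
  refine hasQuadraticUpperBound_of_inner_gradient_sub_le hf fun u v => ?_
  calc ⟪f' v - f' u, v - u⟫ ≤ ‖f' v - f' u‖ * ‖v - u‖ := real_inner_le_norm _ _
    _ ≤ L * ‖v - u‖ * ‖v - u‖ := by gcongr; exact hlip v u
    _ = L * ‖v - u‖ ^ 2 := by ring

theorem hasQuadraticLowerBound_of_lipschitz_gradient [CompleteSpace E]
    (hf : ∀ x, HasGradientAt f (f' x) x) (hlip : ∀ u v, ‖f' u - f' v‖ ≤ L * ‖u - v‖) :
    HasQuadraticLowerBound f f' (-L) := by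
  have hneg : HasQuadraticUpperBound (-f) (-f') L := by
    refine hasQuadraticUpperBound_of_lipschitz_gradient (fun x => ?_) fun u v => ?_
    · rw [hasGradientAt_iff_hasFDerivAt]
      simpa using (hf x).hasFDerivAt.neg
    · simpa [neg_add_eq_sub, norm_sub_rev] using hlip u v
  intro u v
  have := hneg u v
  simp only [Pi.neg_apply, inner_neg_left] at this
  linarith

theorem HasQuadraticLowerBound.strongConvexOn (hf : HasQuadraticLowerBound f f' m) {X : Set E}
    (hX : Convex ℝ X) : StrongConvexOn X m f := by
  refine ⟨hX, fun u _ v _ a b ha hb hab => ?_⟩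
  obtain rfl : a = 1 - b := by linarith
  set p := (1 - b) • u + b • v with hp
  have hup : u - p = b • (u - v) := by rw [hp]; module
  have hvp : v - p = (1 - b) • (-(u - v)) := by rw [hp]; module
  have hu := mul_le_mul_of_nonneg_left (hf p u) ha
  have hv := mul_le_mul_of_nonneg_left (hf p v) hb
  rw [hup, norm_smul, inner_smul_right, mul_pow, Real.norm_of_nonneg hb] at hu
  rw [hvp, norm_smul, inner_smul_right, mul_pow, norm_neg, inner_neg_right,
    Real.norm_of_nonneg ha] at hv
  simp only [smul_eq_mul]
  linarith

theorem HasQuadraticLowerBound.bddBelow_range (hf : HasQuadraticLowerBound f f' m) (hm : 0 < m) :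
    BddBelow (Set.range f) := by
  -- The witness is the minimum of the lower parabola at `0`.
  refine ⟨f 0 - ‖f' 0‖ ^ 2 / (2 * m), ?_⟩
  rintro _ ⟨v, rfl⟩
  have hsquare : ⟪f' 0, v⟫ + m / 2 * ‖v‖ ^ 2 + ‖f' 0‖ ^ 2 / (2 * m)
      = ‖f' 0 + m • v‖ ^ 2 / (2 * m) := by
    rw [norm_add_sq_real, inner_smul_right, norm_smul, Real.norm_of_nonneg hm.le]
    field_simp
    ring
  have hnonneg : 0 ≤ ‖f' 0 + m • v‖ ^ 2 / (2 * m) := by positivity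
  have hbound := hf 0 v
  rw [sub_zero] at hbound
  linarith

theorem inner_gradient_sub_le (hlower : HasQuadraticLowerBound f f' m)
    (hupper : HasQuadraticUpperBound f f' L) (x v p : E) :
    ⟪f' x, v - p⟫ ≤ f v - f p - m / 2 * ‖v - x‖ ^ 2 + L / 2 * ‖p - x‖ ^ 2 := by
  have hsplit : ⟪f' x, v - p⟫ = ⟪f' x, v - x⟫ - ⟪f' x, p - x⟫ := by
    rw [← inner_sub_right, sub_sub_sub_cancel_right]
  linarith [hlower x v, hupper x p]

end QuadraticBounds

theorem add_sq_norm_sub_le_of_isMinOn {E : Type*} [NormedAddCommGroup E] [NormedSpace ℝ E]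
    {g : E → ℝ} {X : Set E} {m : ℝ} {u w : E} (hg : StrongConvexOn X m g) (hu : u ∈ X)
    (hmin : IsMinOn g X u) (hw : w ∈ X) : g u + m / 2 * ‖w - u‖ ^ 2 ≤ g w := by
  have hsegment : ∀ t ∈ Set.Ioo (0 : ℝ) 1, g u + (1 - t) * (m / 2 * ‖w - u‖ ^ 2) ≤ g w := by
    rintro t ⟨ht0, ht1⟩
    have hmem := hg.1 hu hw (sub_nonneg.2 ht1.le) ht0.le (sub_add_cancel 1 t)
    have hmid := hg.2 hu hw (sub_nonneg.2 ht1.le) ht0.le (sub_add_cancel 1 t)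
    simp only [smul_eq_mul, norm_sub_rev u w] at hmid
    have : t * (g u + (1 - t) * (m / 2 * ‖w - u‖ ^ 2)) ≤ t * g w := by
      linarith [isMinOn_iff.1 hmin _ hmem]
    exact le_of_mul_le_mul_left this ht0
  have hlim : Filter.Tendsto (fun t : ℝ => g u + (1 - t) * (m / 2 * ‖w - u‖ ^ 2))
      (nhdsWithin 0 (Set.Ioi 0)) (nhds (g u + (1 - 0) * (m / 2 * ‖w - u‖ ^ 2))) :=
    ((by fun_prop : Continuous fun t : ℝ => g u + (1 - t) * (m / 2 * ‖w - u‖ ^ 2)).tendsto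
      0).mono_left nhdsWithin_le_nhds
  rw [sub_zero, one_mul] at hlim
  exact le_of_tendsto hlim
    (Filter.eventually_of_mem (Ioo_mem_nhdsGT zero_lt_one) hsegment)

section Proximal

variable {E : Type*} [NormedAddCommGroup E]

/-- The objective of the proximal subproblem of `k` with weight `c` centred at `z`. The proximal
augmented Lagrangian is of this form, and so is the function minimized in its envelope. -/
noncomputable def proxObjective (k : E → ℝ) (c : ℝ) (z : E) : E → ℝ :=
  fun u => k u + c / 2 * ‖u - z‖ ^ 2

/-- The Moreau envelope at `w` of `k` restricted to `X`. The infimum is real-valued, so it is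
meaningful only when the objective is bounded below on a nonempty `X`. -/
noncomputable def moreauEnvelope (X : Set E) (k : E → ℝ) (c : ℝ) (w : E) : ℝ :=
  ⨅ u : X, proxObjective k c w u

theorem proxObjective_comm (k : E → ℝ) (c d : ℝ) (z x : E) :
    proxObjective (proxObjective k c z) d x = proxObjective (proxObjective k d x) c z := by
  funext u
  exact add_right_comm _ _ _

variable [InnerProductSpace ℝ E] {k : E → ℝ} {k' : E → E} {m L c : ℝ} {X : Set E}

theorem norm_sub_sq_eq_add_inner_add (u v z : E) :
    ‖v - z‖ ^ 2 = ‖u - z‖ ^ 2 + 2 * ⟪u - z, v - u⟫ + ‖v - u‖ ^ 2 := by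
  rw [← norm_add_sq_real, add_comm, sub_add_sub_cancel]

theorem HasQuadraticLowerBound.proxObjective (hk : HasQuadraticLowerBound k k' m) (c : ℝ) (z : E) :
    HasQuadraticLowerBound (proxObjective k c z) (fun u => k' u + c • (u - z)) (m + c) := by
  intro u v
  simp only [_root_.proxObjective, inner_add_left, real_inner_smul_left]
  rw [norm_sub_sq_eq_add_inner_add u v z]
  linarith [hk u v]

theorem HasQuadraticUpperBound.proxObjective (hk : HasQuadraticUpperBound k k' L) (c : ℝ) (z : E) :
    HasQuadraticUpperBound (proxObjective k c z) (fun u => k' u + c • (u - z)) (L + c) := by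
  intro u v
  simp only [_root_.proxObjective, inner_add_left, real_inner_smul_left]
  rw [norm_sub_sq_eq_add_inner_add u v z]
  linarith [hk u v]

theorem moreauEnvelope_le (hk : HasQuadraticLowerBound k k' m) (hmc : 0 < m + c) (w : E) {u : E}
    (hu : u ∈ X) : moreauEnvelope X k c w ≤ proxObjective k c w u :=
  ciInf_le (((hk.proxObjective c w).bddBelow_range hmc).mono
    (Set.range_comp_subset_range Subtype.val (proxObjective k c w))) (⟨u, hu⟩ : X)

theorem isMinOn_proxObjective_of_eq_moreauEnvelope (hk : HasQuadraticLowerBound k k' m)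
    (hmc : 0 < m + c) {w v : E} (hv : proxObjective k c w v = moreauEnvelope X k c w) :
    IsMinOn (proxObjective k c w) X v :=
  isMinOn_iff.2 fun _ hu => hv.trans_le (moreauEnvelope_le hk hmc w hu)

theorem proxObjective_add_sq_norm_sub_le_of_isMinOn (hk : HasQuadraticLowerBound k k' m)
    (hX : Convex ℝ X) {z v w : E} (hv : v ∈ X) (hmin : IsMinOn (proxObjective k c z) X v)
    (hw : w ∈ X) :
    proxObjective k c z v + (m + c) / 2 * ‖w - v‖ ^ 2 ≤ proxObjective k c z w :=
  add_sq_norm_sub_le_of_isMinOn ((hk.proxObjective c z).strongConvexOn hX) hv hmin hw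

theorem proxObjective_sub_proxObjective (k : E → ℝ) (c : ℝ) (z z' p q : E) :
    proxObjective k c z p - proxObjective k c z q
      = proxObjective k c z' p - proxObjective k c z' q + c * ⟪p - q, z' - z⟫ := by
  have hinner : ⟪p - q, z' - z⟫ = ⟪z' - z, p - z'⟫ - ⟪z' - z, q - z'⟫ := by
    rw [real_inner_comm, ← inner_sub_right, sub_sub_sub_cancel_right]
  simp only [proxObjective]
  rw [norm_sub_sq_eq_add_inner_add z' p z, norm_sub_sq_eq_add_inner_add z' q z, hinner]
  ring

theorem proxObjective_sub_le_of_isMinOn (hk : HasQuadraticLowerBound k k' m) (hX : Convex ℝ X)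
    (hc : 0 ≤ c) (hmc : 0 < m + c) {z z' v p : E} (hv : v ∈ X)
    (hmin : IsMinOn (proxObjective k c z') X v) (hp : p ∈ X) :
    proxObjective k c z v - proxObjective k c z p ≤ c ^ 2 / (2 * (m + c)) * ‖z - z'‖ ^ 2 := by
  have hgrowth := proxObjective_add_sq_norm_sub_le_of_isMinOn hk hX hv hmin hp
  have hmove := proxObjective_sub_proxObjective k c z z' v p
  have hcauchy : c * ⟪v - p, z' - z⟫ ≤ c * (‖p - v‖ * ‖z - z'‖) := by
    rw [norm_sub_rev p, norm_sub_rev z]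
    gcongr
    exact real_inner_le_norm _ _
  have hyoung : c * (‖p - v‖ * ‖z - z'‖)
      ≤ (m + c) / 2 * ‖p - v‖ ^ 2 + c ^ 2 / (2 * (m + c)) * ‖z - z'‖ ^ 2 := by
    rw [← sub_nonneg]
    calc (0 : ℝ) ≤ ((m + c) * ‖p - v‖ - c * ‖z - z'‖) ^ 2 / (2 * (m + c)) := by positivity
      _ = _ := by field_simp; ring
  linarith

theorem norm_sub_le_of_isMinOn_proxObjective (hk : HasQuadraticLowerBound k k' m)
    (hX : Convex ℝ X) (hc : 0 ≤ c) (hmc : 0 < m + c) {z z' u v : E} (hu : u ∈ X) (hv : v ∈ X)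
    (humin : IsMinOn (proxObjective k c z) X u) (hvmin : IsMinOn (proxObjective k c z') X v) :
    ‖u - v‖ ≤ c / (m + c) * ‖z - z'‖ := by
  have hu_growth := proxObjective_add_sq_norm_sub_le_of_isMinOn hk hX hu humin hv
  have hv_growth := proxObjective_add_sq_norm_sub_le_of_isMinOn hk hX hv hvmin hu
  have hmove := proxObjective_sub_proxObjective k c z z' v u
  have hcauchy : c * ⟪v - u, z' - z⟫ ≤ c * (‖u - v‖ * ‖z - z'‖) := by
    rw [norm_sub_rev u, norm_sub_rev z]
    gcongr
    exact real_inner_le_norm _ _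
  rw [norm_sub_rev v u] at hu_growth
  rcases (norm_nonneg (u - v)).eq_or_lt with hzero | hpos
  · rw [← hzero]
    positivity
  · rw [div_mul_eq_mul_div, le_div_iff₀ hmc]
    have : ‖u - v‖ * (‖u - v‖ * (m + c)) ≤ ‖u - v‖ * (c * ‖z - z'‖) := by linarith
    exact le_of_mul_le_mul_left this hpos

theorem sq_norm_sub_le_of_isMinOn_proxObjective (hk : HasQuadraticLowerBound k k' m)
    (hX : Convex ℝ X) (hc : 0 ≤ c) {d : ℝ} (hmcd : 0 < m + c + d) {x z z' u v : E} (hu : u ∈ X)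
    (hv : v ∈ X) (humin : IsMinOn (proxObjective (proxObjective k c z) d x) X u)
    (hvmin : IsMinOn (proxObjective (proxObjective k c z') d x) X v) :
    ‖u - x‖ ^ 2 ≤ 2 * ((c / (m + c + d)) ^ 2 * ‖z - z'‖ ^ 2 + ‖v - x‖ ^ 2) := by
  rw [proxObjective_comm] at humin hvmin
  rw [add_right_comm] at hmcd ⊢
  have hdist := norm_sub_le_of_isMinOn_proxObjective (hk.proxObjective d x) hX hc hmcd hu hv
    humin hvmin
  calc ‖u - x‖ ^ 2 ≤ (‖u - v‖ + ‖v - x‖) ^ 2 := by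
        gcongr
        exact norm_sub_le_norm_sub_add_norm_sub _ _ _
    _ ≤ 2 * (‖u - v‖ ^ 2 + ‖v - x‖ ^ 2) := add_sq_le
    _ ≤ 2 * ((c / (m + d + c)) ^ 2 * ‖z - z'‖ ^ 2 + ‖v - x‖ ^ 2) := by
        rw [← mul_pow]
        gcongr

end Proximal

section ProjectedStep

variable {E : Type*} [NormedAddCommGroup E] [InnerProductSpace ℝ E] {X : Set E}

theorem sq_norm_sub_add_sq_norm_sub_le_of_isMinOn_norm (hX : Convex ℝ X) {w p v : E} (hp : p ∈ X)
    (hmin : IsMinOn (fun u => ‖w - u‖) X p) (hv : v ∈ X) :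
    ‖p - w‖ ^ 2 + ‖v - p‖ ^ 2 ≤ ‖v - w‖ ^ 2 := by
  have hzero : HasQuadraticLowerBound (0 : E → ℝ) 0 0 := fun u v => by simp
  have hprox : IsMinOn (proxObjective 0 1 w) X p := isMinOn_iff.2 fun u hu => by
    have := isMinOn_iff.1 hmin u hu
    rw [norm_sub_rev w p, norm_sub_rev w u] at this
    simp only [proxObjective, Pi.zero_apply]
    gcongr
  have hgrowth := proxObjective_add_sq_norm_sub_le_of_isMinOn hzero hX hp hprox hv
  simp only [proxObjective, Pi.zero_apply] at hgrowth
  linarith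

theorem sq_norm_sub_le_of_projected_gradient_step {f : E → ℝ} {f' : E → E} {m L τ : ℝ}
    (hlower : HasQuadraticLowerBound f f' m) (hupper : HasQuadraticUpperBound f f' L)
    (hX : Convex ℝ X) (hτ : 0 ≤ τ) {x d p v : E} (hp : p ∈ X)
    (hmin : IsMinOn (fun u => ‖x - τ • d - u‖) X p) (hv : v ∈ X) :
    ‖v - p‖ ^ 2 ≤ (1 - τ * m) * ‖v - x‖ ^ 2 + (τ * L - 1 / 2) * ‖p - x‖ ^ 2
      + 2 * τ * (f v - f p) + 2 * τ * ⟪d - f' x, v - x⟫ + 2 * τ ^ 2 * ‖d - f' x‖ ^ 2 := by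
  have hproj : ‖v - p‖ ^ 2 + ‖p - x‖ ^ 2 ≤ ‖v - x‖ ^ 2 + 2 * τ * ⟪d, v - p⟫ := by
    have h := sq_norm_sub_add_sq_norm_sub_le_of_isMinOn_norm hX hp hmin hv
    have hshift (q : E) :
        ‖q - (x - τ • d)‖ ^ 2 = ‖q - x‖ ^ 2 + 2 * τ * ⟪d, q - x⟫ + ‖τ • d‖ ^ 2 := by
      rw [← sub_add, norm_add_sq_real, inner_smul_right, real_inner_comm]
      ring
    have hsplit : ⟪d, v - p⟫ = ⟪d, v - x⟫ - ⟪d, p - x⟫ := by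
      rw [← inner_sub_right, sub_sub_sub_cancel_right]
    rw [hshift, hshift] at h
    rw [hsplit]
    linarith
  have hdescent := mul_le_mul_of_nonneg_left (inner_gradient_sub_le hlower hupper x v p) hτ
  set n := d - f' x with hn
  have hdecompose : ⟪d, v - p⟫ = ⟪f' x, v - p⟫ + ⟪n, v - x⟫ - ⟪n, p - x⟫ := by
    rw [add_sub_assoc, ← inner_sub_right, sub_sub_sub_cancel_right, ← inner_add_left, hn,
      add_sub_cancel]
  have hnoise : -(2 * τ * ⟪n, p - x⟫) ≤ 2 * τ ^ 2 * ‖n‖ ^ 2 + 1 / 2 * ‖p - x‖ ^ 2 := by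
    have hsq := norm_add_sq_real ((2 * τ) • n) (p - x)
    rw [real_inner_smul_left, norm_smul, mul_pow, Real.norm_eq_abs, sq_abs] at hsq
    linarith [sq_nonneg ‖(2 * τ) • n + (p - x)‖]
  rw [hdecompose] at hproj
  linarith

theorem moreauEnvelope_projected_gradient_step_le {h : E → ℝ} {h' : E → E} {m L μ lam τ : ℝ}
    (hlower : HasQuadraticLowerBound h h' m) (hupper : HasQuadraticUpperBound h h' L)
    (hX : Convex ℝ X) (hμ : 0 ≤ μ) (hlam : 0 ≤ lam) (hγ : 0 < m + μ + lam) (hτ : 0 ≤ τ)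
    (hstep : 2 * (τ * (L + μ + lam)) ≤ 1) {x z z' d p v : E} (hv : v ∈ X)
    (hvmin : IsMinOn (proxObjective (proxObjective h μ z') lam x) X v) (hp : p ∈ X)
    (hpmin : IsMinOn (fun u => ‖x - τ • d - u‖) X p) :
    moreauEnvelope X (proxObjective h μ z') lam p
      ≤ proxObjective (proxObjective h μ z') lam x v
        - lam * τ * (m + μ + lam) / 2 * ‖v - x‖ ^ 2
        + lam * τ * μ ^ 2 / (2 * (m + μ + lam)) * ‖z - z'‖ ^ 2
        + lam * τ * ⟪d - (h' x + μ • (x - z)), v - x⟫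
        + lam * τ ^ 2 * ‖d - (h' x + μ • (x - z))‖ ^ 2 := by
  set n := d - (h' x + μ • (x - z))
  have henvelope := moreauEnvelope_le (hlower.proxObjective μ z') hγ p hv
  have hstep_dist := sq_norm_sub_le_of_projected_gradient_step (hlower.proxObjective μ z)
    (hupper.proxObjective μ z) hX hτ hp hpmin hv
  have hgap : proxObjective h μ z v - proxObjective h μ z p
      ≤ lam / 2 * ‖p - x‖ ^ 2 - lam / 2 * ‖v - x‖ ^ 2
        + μ ^ 2 / (2 * (m + μ + lam)) * ‖z - z'‖ ^ 2 := by
    rw [proxObjective_comm] at hvmin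
    have hγ_comm : m + lam + μ = m + μ + lam := add_right_comm _ _ _
    have hle := proxObjective_sub_le_of_isMinOn (z := z) (hlower.proxObjective lam x) hX hμ
      (hγ_comm ▸ hγ) hv hvmin hp
    rw [← proxObjective_comm, hγ_comm] at hle
    simp only [proxObjective] at hle ⊢
    linarith
  have hgap_step := mul_le_mul_of_nonneg_left hgap hτ
  have hstep_sq := mul_le_mul_of_nonneg_right hstep (sq_nonneg ‖p - x‖)
  have hdist : ‖v - p‖ ^ 2 ≤ ‖v - x‖ ^ 2 - τ * (m + μ + lam) * ‖v - x‖ ^ 2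
      + τ * (μ ^ 2 / (m + μ + lam)) * ‖z - z'‖ ^ 2 + 2 * τ * ⟪n, v - x⟫
      + 2 * τ ^ 2 * ‖n‖ ^ 2 := by
    have hhalf : μ ^ 2 / (2 * (m + μ + lam)) = μ ^ 2 / (m + μ + lam) / 2 := by
      rw [div_div, mul_comm 2]
    rw [hhalf] at hgap_step
    linarith
  calc moreauEnvelope X (proxObjective h μ z') lam p
      ≤ proxObjective (proxObjective h μ z') lam x v
        + lam / 2 * (‖v - p‖ ^ 2 - ‖v - x‖ ^ 2) := by
        simp only [proxObjective] at henvelope ⊢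
        linarith
    _ ≤ proxObjective (proxObjective h μ z') lam x v
        + lam / 2 * (-τ * (m + μ + lam) * ‖v - x‖ ^ 2
          + τ * (μ ^ 2 / (m + μ + lam)) * ‖z - z'‖ ^ 2 + 2 * τ * ⟪n, v - x⟫
          + 2 * τ ^ 2 * ‖n‖ ^ 2) := by
        gcongr
        linarith
    _ = _ := by
        field_simp
        ring

end ProjectedStep

section Expectation

variable {Ω E : Type*} [MeasurableSpace Ω] [NormedAddCommGroup E] [InnerProductSpace ℝ E]
  [CompleteSpace E]

theorem integral_le_of_le_inner_add_sq_norm {P : Measure Ω} [IsProbabilityMeasure P]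
    {G : Ω → E} {ψ : Ω → ℝ} {a w : E} {α β s r : ℝ} (hG : MemLp G 2 P) (hmean : ∫ ω, G ω ∂P = a)
    (hvar : ∫ ω, ‖G ω - a‖ ^ 2 ∂P ≤ s) (hβ : 0 ≤ β) (hψ : Integrable ψ P)
    (hbound : ∀ ω, ψ ω ≤ r + α * ⟪G ω - a, w⟫ + β * ‖G ω - a‖ ^ 2) :
    ∫ ω, ψ ω ∂P ≤ r + β * s := by
  have hnoise : MemLp (fun ω => G ω - a) 2 P := hG.sub (memLp_const a)
  have hnoise_int : Integrable (fun ω => G ω - a) P := hnoise.integrable one_le_two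
  have hnoise_mean : ∫ ω, (G ω - a) ∂P = 0 := by
    rw [integral_sub (hG.integrable one_le_two) (integrable_const a), hmean]
    simp
  have hinner_mean : ∫ ω, ⟪G ω - a, w⟫ ∂P = 0 := by
    simp_rw [real_inner_comm w]
    rw [integral_inner hnoise_int w, hnoise_mean, inner_zero_right]
  have hinner : Integrable (fun ω => α * ⟪G ω - a, w⟫) P :=
    (hnoise_int.inner_const w).const_mul α
  have hsq : Integrable (fun ω => β * ‖G ω - a‖ ^ 2) P :=
    ((memLp_two_iff_integrable_sq_norm hnoise.1).1 hnoise).const_mul β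
  have hlin : Integrable (fun ω => r + α * ⟪G ω - a, w⟫) P := (integrable_const r).add hinner
  calc ∫ ω, ψ ω ∂P ≤ ∫ ω, (r + α * ⟪G ω - a, w⟫ + β * ‖G ω - a‖ ^ 2) ∂P :=
        integral_mono hψ (hlin.add hsq) hbound
    _ = r + β * ∫ ω, ‖G ω - a‖ ^ 2 ∂P := by
        rw [integral_add hlin hsq, integral_add (integrable_const r) hinner, integral_const_mul,
          integral_const_mul, hinner_mean]
        simp
    _ ≤ r + β * s := by gcongr

theorem integral_moreauEnvelope_projected_gradient_step_le {P : Measure Ω} [IsProbabilityMeasure P]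
    {h : E → ℝ} {h' : E → E} {m L μ lam τ s : ℝ} {X : Set E}
    (hlower : HasQuadraticLowerBound h h' m) (hupper : HasQuadraticUpperBound h h' L)
    (hX : Convex ℝ X) (hμ : 0 ≤ μ) (hlam : 0 ≤ lam) (hγ : 0 < m + μ + lam) (hτ : 0 ≤ τ)
    (hstep : 2 * (τ * (L + μ + lam)) ≤ 1) {x z z' u v : E} (hu : u ∈ X) (hv : v ∈ X)
    (humin : IsMinOn (proxObjective (proxObjective h μ z) lam x) X u)
    (hvmin : IsMinOn (proxObjective (proxObjective h μ z') lam x) X v) {G p : Ω → E}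
    (hp : ∀ ω, p ω ∈ X) (hpmin : ∀ ω, IsMinOn (fun w => ‖x - τ • G ω - w‖) X (p ω))
    (hG : MemLp G 2 P) (hmean : ∫ ω, G ω ∂P = h' x + μ • (x - z))
    (hvar : ∫ ω, ‖G ω - (h' x + μ • (x - z))‖ ^ 2 ∂P ≤ s)
    (hint : Integrable (fun ω => moreauEnvelope X (proxObjective h μ z') lam (p ω)) P) :
    ∫ ω, moreauEnvelope X (proxObjective h μ z') lam (p ω) ∂P
      ≤ proxObjective (proxObjective h μ z') lam x v
        - lam * τ * (m + μ + lam) / 4 * ‖u - x‖ ^ 2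
        + lam * τ * (μ ^ 2 / (m + μ + lam)) * ‖z - z'‖ ^ 2 + lam * τ ^ 2 * s := by
  have hexpect := integral_le_of_le_inner_add_sq_norm hG hmean hvar (by positivity) hint fun ω =>
    moreauEnvelope_projected_gradient_step_le (z := z) hlower hupper hX hμ hlam hγ hτ hstep hv hvmin
      (hp ω) (hpmin ω)
  have hdist := mul_le_mul_of_nonneg_left
    (sq_norm_sub_le_of_isMinOn_proxObjective hlower hX hμ hγ hu hv humin hvmin)
    (by positivity : 0 ≤ lam * τ * (m + μ + lam) / 4)
  have hcoef : lam * τ * (m + μ + lam) / 4 * (2 * (μ / (m + μ + lam)) ^ 2)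
      + lam * τ * μ ^ 2 / (2 * (m + μ + lam)) = lam * τ * (μ ^ 2 / (m + μ + lam)) := by
    field_simp
    ring
  rw [← hcoef]
  linarith

end Expectation

section AugmentedLagrangian

variable {E F : Type*} [NormedAddCommGroup E] [InnerProductSpace ℝ E] [NormedAddCommGroup F]
  [InnerProductSpace ℝ F]

/-- The augmented Lagrangian of minimizing `f` subject to `A x = b`, with penalty `ρ`, as a function
of `x` at the fixed multiplier `y`. -/
noncomputable def augLagrangian (f : E → ℝ) (A : E →L[ℝ] F) (b : F) (ρ : ℝ) (y : F) : E → ℝ :=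
  fun x => f x + ⟪A x - b, y⟫ + ρ / 2 * ‖A x - b‖ ^ 2

variable [CompleteSpace E] [CompleteSpace F]

/-- The gradient in `x` of `augLagrangian f A b ρ y`, where `f'` is the gradient of `f`. -/
noncomputable def augLagrangianGradient (f' : E → E) (A : E →L[ℝ] F) (b : F) (ρ : ℝ) (y : F) :
    E → E :=
  fun x => f' x + ContinuousLinearMap.adjoint A y + ρ • ContinuousLinearMap.adjoint A (A x - b)

theorem augLagrangian_eq_tangent_add (f : E → ℝ) (f' : E → E) (A : E →L[ℝ] F) (b : F) (ρ : ℝ)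
    (y : F) (u v : E) :
    augLagrangian f A b ρ y v
      = augLagrangian f A b ρ y u + ⟪augLagrangianGradient f' A b ρ y u, v - u⟫
        + (f v - f u - ⟪f' u, v - u⟫) + ρ / 2 * ‖A (v - u)‖ ^ 2 := by
  have hlinear : ⟪A v - b, y⟫ = ⟪A u - b, y⟫ + ⟪y, A (v - u)⟫ := by
    rw [real_inner_comm (A (v - u)) y, ← inner_add_left, map_sub, add_comm, sub_add_sub_cancel]
  have hpenalty : ‖A v - b‖ ^ 2
      = ‖A u - b‖ ^ 2 + 2 * ⟪A u - b, A (v - u)⟫ + ‖A (v - u)‖ ^ 2 := by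
    rw [norm_sub_sq_eq_add_inner_add (A u), map_sub]
  simp only [augLagrangian, augLagrangianGradient, inner_add_left, real_inner_smul_left,
    ContinuousLinearMap.adjoint_inner_left]
  rw [hlinear, hpenalty]
  ring

variable {f : E → ℝ} {f' : E → E} {m L ρ : ℝ}

theorem HasQuadraticLowerBound.augLagrangian (hf : HasQuadraticLowerBound f f' m)
    (A : E →L[ℝ] F) (b : F) (hρ : 0 ≤ ρ) (y : F) :
    HasQuadraticLowerBound (augLagrangian f A b ρ y) (augLagrangianGradient f' A b ρ y) m := by
  intro u v
  have hpenalty : 0 ≤ ρ / 2 * ‖A (v - u)‖ ^ 2 := by positivity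
  linarith [hf u v, augLagrangian_eq_tangent_add f f' A b ρ y u v]

theorem HasQuadraticUpperBound.augLagrangian (hf : HasQuadraticUpperBound f f' L)
    (A : E →L[ℝ] F) (b : F) (hρ : 0 ≤ ρ) (y : F) :
    HasQuadraticUpperBound (augLagrangian f A b ρ y) (augLagrangianGradient f' A b ρ y)
      (L + ρ * ‖A‖ ^ 2) := by
  intro u v
  have hpenalty : ρ / 2 * ‖A (v - u)‖ ^ 2 ≤ ρ / 2 * (‖A‖ * ‖v - u‖) ^ 2 := by
    gcongr
    exact A.le_opNorm _
  linarith [hf u v, augLagrangian_eq_tangent_add f f' A b ρ y u v]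

end AugmentedLagrangian

theorem stmt_2_general
    {E F : Type*}
    [NormedAddCommGroup E] [InnerProductSpace ℝ E] [CompleteSpace E]
    [NormedAddCommGroup F] [InnerProductSpace ℝ F] [CompleteSpace F]
    (A : E →L[ℝ] F) (b : F) (X : Set E) (hXcv : Convex ℝ X)
    (f : E → ℝ) (f' : E → E) (Lf : ℝ) (hLf : 0 ≤ Lf)
    (hf : ∀ x, HasGradientAt f (f' x) x)
    (hlip : ∀ u v, ‖f' u - f' v‖ ≤ Lf * ‖u - v‖)
    (ρ μ : ℝ) (hρ : 0 ≤ ρ) (hμ : 0 < μ)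
    (K : E → F → E → ℝ)
    (hK : ∀ x y z, K x y z =
      f x + ⟪A x - b, y⟫ + (ρ / 2) * ‖A x - b‖ ^ 2 + (μ / 2) * ‖x - z‖ ^ 2)
    (gradK : E → F → E → E)
    (hgradK : ∀ x y z, gradK x y z =
      f' x + ContinuousLinearMap.adjoint A y
        + ρ • ContinuousLinearMap.adjoint A (A x - b) + μ • (x - z))
    (proj : E → E)
    (hproj : ∀ w, proj w ∈ X ∧ ∀ v ∈ X, ‖w - proj w‖ ≤ ‖w - v‖)
    (hLfμ : Lf ≤ 7 * μ)
    (lam : ℝ) (hlamdef : lam = Lf + ρ * ‖A‖ ^ 2 + μ)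
    (γs : ℝ) (hγs : γs = μ - Lf + lam)
    (τ : ℝ) (hτ0 : 0 < τ) (hτ : τ ≤ 1 / (4 * lam))
    (x : E) (y : F) (z z' : E)
    (φ : E → ℝ)
    (hφ : ∀ w, φ w = ⨅ u : X, (K u y z' + (lam / 2) * ‖(u : E) - w‖ ^ 2))
    (hatt : ∃ u ∈ X, K u y z' + (lam / 2) * ‖u - x‖ ^ 2 = φ x)
    (u₀ : E)
    (hu₀ : u₀ ∈ X ∧ ∀ w ∈ X,
      K u₀ y z + (lam / 2) * ‖u₀ - x‖ ^ 2 ≤ K w y z + (lam / 2) * ‖w - x‖ ^ 2)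
    (σ : ℝ)
    {Ω : Type*} [MeasurableSpace Ω] (P : Measure Ω) [IsProbabilityMeasure P]
    (G : Ω → E) (hG : MemLp G 2 P)
    (hGmean : ∫ ω, G ω ∂P = gradK x y z)
    (hGvar : ∫ ω, ‖G ω - gradK x y z‖ ^ 2 ∂P ≤ σ ^ 2)
    (hint : Integrable (fun ω => φ (proj (x - τ • G ω))) P) :
    ∫ ω, φ (proj (x - τ • G ω)) ∂P
      ≤ φ x - (τ * lam ^ 2 / 16) * ‖u₀ - x‖ ^ 2
        + (lam * τ * μ + 2 * lam * τ ^ 2 * μ ^ 2 + τ * lam ^ 2 * μ ^ 2 / (8 * γs ^ 2))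
          * ‖z - z'‖ ^ 2
        + lam * τ ^ 2 * σ ^ 2 := by
  have hpenalty : 0 ≤ ρ * ‖A‖ ^ 2 := by positivity
  have hlam : 0 < lam := by linarith
  have hμγ : μ ≤ γs := by linarith
  -- `4 * γs - lam = 7 * μ - Lf + 3 * ρ * ‖A‖ ^ 2`
  have hlamγ : lam ≤ 4 * γs := by linarith
  have hγ_eq : -Lf + μ + lam = γs := by linarith
  have hγ : 0 < -Lf + μ + lam := by linarith
  have hstep : 2 * (τ * (Lf + ρ * ‖A‖ ^ 2 + μ + lam)) ≤ 1 := by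
    rw [le_div_iff₀ (by positivity)] at hτ
    rw [← hlamdef]
    linarith
  set h := augLagrangian f A b ρ y
  have hlower := (hasQuadraticLowerBound_of_lipschitz_gradient hf hlip).augLagrangian A b hρ y
  have hupper := (hasQuadraticUpperBound_of_lipschitz_gradient hf hlip).augLagrangian A b hρ y
  have hobj (c w u : E) : K u y c + lam / 2 * ‖u - w‖ ^ 2
      = proxObjective (proxObjective h μ c) lam w u := by rw [hK]; rfl
  obtain rfl : φ = moreauEnvelope X (proxObjective h μ z') lam :=
    funext fun w => by simp only [hφ, hobj, moreauEnvelope]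
  obtain ⟨v, hv, hvφ⟩ := hatt
  rw [hobj] at hvφ
  simp only [hobj] at hu₀
  rw [hgradK] at hGmean hGvar
  have hexpect := integral_moreauEnvelope_projected_gradient_step_le hlower hupper hXcv hμ.le
    hlam.le hγ hτ0.le hstep hu₀.1 hv (isMinOn_iff.2 hu₀.2)
    (isMinOn_proxObjective_of_eq_moreauEnvelope (hlower.proxObjective μ z') hγ hvφ)
    (fun ω => (hproj (x - τ • G ω)).1) (fun ω => isMinOn_iff.2 (hproj (x - τ • G ω)).2) hG hGmean
    hGvar hint
  rw [hγ_eq, hvφ] at hexpect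
  have hcoef_u : τ * lam ^ 2 / 16 ≤ lam * τ * γs / 4 := by
    linarith [mul_le_mul_of_nonneg_left hlamγ (mul_pos hτ0 hlam).le]
  have hcoef_z : lam * τ * (μ ^ 2 / γs)
      ≤ lam * τ * μ + 2 * lam * τ ^ 2 * μ ^ 2 + τ * lam ^ 2 * μ ^ 2 / (8 * γs ^ 2) := by
    have hratio : μ ^ 2 / γs ≤ μ := div_le_of_le_mul₀ (by linarith) hμ.le (by rw [sq]; gcongr)
    have hmain := mul_le_mul_of_nonneg_left hratio (mul_pos hlam hτ0).le
    have hslack : 0 ≤ 2 * lam * τ ^ 2 * μ ^ 2 + τ * lam ^ 2 * μ ^ 2 / (8 * γs ^ 2) := by positivity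
    linarith
  exact hexpect.trans (by gcongr)

theorem stmt_2
    {E F : Type*}
    [NormedAddCommGroup E] [InnerProductSpace ℝ E] [FiniteDimensional ℝ E]
    [NormedAddCommGroup F] [InnerProductSpace ℝ F] [FiniteDimensional ℝ F]
    (A : E →L[ℝ] F) (b : F) (X : Set E)
    (hXne : X.Nonempty) (hXcl : IsClosed X) (hXcv : Convex ℝ X)
    (f : E → ℝ) (f' : E → E) (Lf : ℝ) (hLf : 0 ≤ Lf)
    (hf : ∀ x, HasGradientAt f (f' x) x)
    (hlip : ∀ u v, ‖f' u - f' v‖ ≤ Lf * ‖u - v‖)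
    (ρ μ : ℝ) (hρ : 0 ≤ ρ) (hμ : 0 < μ)
    (K : E → F → E → ℝ)
    (hK : ∀ x y z, K x y z =
      f x + ⟪A x - b, y⟫ + (ρ/2) * ‖A x - b‖^2 + (μ/2) * ‖x - z‖^2)
    (gradK : E → F → E → E)
    (hgradK : ∀ x y z, gradK x y z =
      f' x + ContinuousLinearMap.adjoint A y
        + ρ • ContinuousLinearMap.adjoint A (A x - b) + μ • (x - z))
    (proj : E → E)
    (hproj : ∀ w, proj w ∈ X ∧ ∀ v ∈ X, ‖w - proj w‖ ≤ ‖w - v‖)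
    (hμLf : Lf < μ)
    (lam : ℝ) (hlamdef : lam = Lf + ρ * ‖A‖^2 + μ)
    (γs : ℝ) (hγs : γs = μ - Lf + lam)
    (τ : ℝ) (hτ0 : 0 < τ) (hτ : τ ≤ 1/(6*lam))
    (x : E) (hx : x ∈ X) (y : F) (z z' : E)
    (φ : E → ℝ)
    (hφ : ∀ w, φ w = ⨅ u : X, (K u y z' + (lam/2) * ‖(u : E) - w‖^2))
    (hatt : ∃ u ∈ X, K u y z' + (lam/2) * ‖u - x‖^2 = φ x)
    (u₀ : E)
    (hu₀ : u₀ ∈ X ∧ ∀ w ∈ X,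
      K u₀ y z + (lam/2) * ‖u₀ - x‖^2 ≤ K w y z + (lam/2) * ‖w - x‖^2)
    (σ : ℝ) (hσ : 0 ≤ σ)
    {Ω : Type*} [MeasurableSpace Ω] (P : Measure Ω) [IsProbabilityMeasure P]
    [MeasurableSpace E] [BorelSpace E]
    (G : Ω → E) (hGm : Measurable G)
    (hGsq : Integrable (fun ω => ‖G ω‖^2) P)
    (hGmean : ∫ ω, G ω ∂P = gradK x y z)
    (hGvar : ∫ ω, ‖G ω - gradK x y z‖^2 ∂P ≤ σ^2)
    (hint : Integrable (fun ω => φ (proj (x - τ • G ω))) P) :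
    ∫ ω, φ (proj (x - τ • G ω)) ∂P
      ≤ φ x - (τ*lam^2/16) * ‖u₀ - x‖^2
        + (lam*τ*μ + 2*lam*τ^2*μ^2 + τ*lam^2*μ^2/(8*γs^2)) * ‖z - z'‖^2
        + lam*τ^2*σ^2 :=
  stmt_2_general A b X hXcv f f' Lf hLf hf hlip ρ μ hρ hμ K hK gradK hgradK proj hproj
    (by linarith) lam hlamdef γs hγs τ hτ0 (hτ.trans (by rw [hlamdef]; gcongr; norm_num)) x y z z' φ
    hφ hatt u₀ hu₀ σ P G ((memLp_two_iff_integrable_sq_norm hGm.aestronglyMeasurable).2 hGsq) hGmean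
    hGvar hint
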